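/- arXiv:2002.04149 — 3 statements merged into one kernel-verified Lean document; each statement's English description precedes it below -/
import Mathlib

section
/- Let V ∈ ℂ^{n×n} have columns v_1,…,v_n, let P = UU† be Hermitian PSD of rank r with Tr(P) = n and U ∈ ℂ^{n×r}, and let z ~ 𝒞𝒩(0, I_r). Define y = √n · Uz/‖Uz‖ (almost surely well-defined). Then E_z[∏_{i=1}^n |⟨v_i, y⟩|²] ≥ e^{−n·L_r} · ∏_{i=1}^n v_i† P v_i, where L_r = H_{r−1} − log r. -/
open MeasureTheory ProbabilityTheory Matrix Finset Real ComplexOrder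

/-- The standard circularly-symmetric complex Gaussian: real and imaginary parts
are i.i.d. `N(0, 1/2)`. -/
noncomputable def stdCGaussian : Measure ℂ :=
  ((gaussianReal 0 (1/2)).prod (gaussianReal 0 (1/2))).map
    (fun p => (p.1 : ℂ) + p.2 * Complex.I)

/-- The law of a vector of `n` i.i.d. standard circularly-symmetric complex Gaussians. -/
noncomputable def stdCGaussianVec (n : ℕ) : Measure (Fin n → ℂ) :=
  Measure.pi fun _ => stdCGaussian

lemma gamma_integral {E : Type*} [NormedAddCommGroup E] [NormedSpace ℝ E] (k : ℕ) (f : ℝ → E) :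
    ∫ x, f x ∂(gammaMeasure (k + 1 : ℝ) 1) =
      ∫ x in Set.Ioi (0:ℝ), (x ^ k * Real.exp (-x) / (k.factorial : ℝ)) • f x := by
  rw [gammaMeasure, integral_withDensity_eq_integral_toReal_smul]
  · rw [← integral_Ici_eq_integral_Ioi, ← integral_indicator measurableSet_Ici]
    congr 1
    ext x
    have hk : (0:ℝ) < k + 1 := by positivity
    rw [gammaPDF, ENNReal.toReal_ofReal (gammaPDFReal_nonneg hk one_pos x)]
    by_cases hx : 0 ≤ x
    · rw [Set.indicator_of_mem (by exact hx), gammaPDFReal, if_pos hx]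
      congr 1
      simp [Real.Gamma_nat_eq_factorial]
      ring
    · rw [Set.indicator_of_notMem (by exact hx), gammaPDFReal, if_neg hx, zero_smul]
  · exact (measurable_gammaPDFReal _ _).ennreal_ofReal
  · exact ae_of_all _ fun x => ENNReal.ofReal_lt_top

lemma gamma_integrable (k : ℕ) (f : ℝ → ℝ) 
    (h : IntegrableOn (fun x => x ^ k * Real.exp (-x) * f x) (Set.Ioi (0:ℝ))) :
    Integrable f (gammaMeasure (k + 1 : ℝ) 1) := by
  rw [gammaMeasure, integrable_withDensity_iff_integrable_smul']
  · have h2 : IntegrableOn (fun x => x ^ k * Real.exp (-x) * f x) (Set.Ici (0:ℝ)) := by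
      rwa [integrableOn_Ici_iff_integrableOn_Ioi]
    have h3 := (h2.integrable_indicator measurableSet_Ici).const_mul ((k.factorial : ℝ)⁻¹)
    refine h3.congr (ae_of_all _ fun x => ?_)
    symm
    have hk : (0:ℝ) < k + 1 := by positivity
    change (ENNReal.ofReal (gammaPDFReal _ _ x)).toReal • f x = (k.factorial : ℝ)⁻¹ * Set.indicator _ _ x
    rw [ENNReal.toReal_ofReal (gammaPDFReal_nonneg hk one_pos x)]
    by_cases hx : 0 ≤ x
    · rw [Set.indicator_of_mem (by exact hx), gammaPDFReal, if_pos hx]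
      simp [Real.Gamma_nat_eq_factorial]
      ring
    · rw [Set.indicator_of_notMem (by exact hx), gammaPDFReal, if_neg hx, zero_smul, mul_zero]
  · exact (measurable_gammaPDFReal _ _).ennreal_ofReal
  · exact ae_of_all _ fun x => ENNReal.ofReal_lt_top

lemma gi_integrable (k : ℕ) (b : ℂ) (hb : b.re = 1) :
    IntegrableOn (fun x : ℝ => (x : ℂ) ^ k * Complex.exp (-b * x)) (Set.Ioi (0:ℝ)) := by
  have h := Real.GammaIntegral_convergent (s := (k:ℝ) + 1) (by positivity)
  refine Integrable.mono' h (by fun_prop) ?_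
  refine (ae_restrict_iff' measurableSet_Ioi).mpr (ae_of_all _ fun x hx => ?_)
  have hx' : (0:ℝ) < x := hx
  simp [Complex.norm_exp, hb, abs_of_pos hx', mul_comm]

lemma gi_tendsto (k : ℕ) (b : ℂ) (hb : b.re = 1) :
    Filter.Tendsto (fun x : ℝ => (x : ℂ) ^ k * Complex.exp (-b * x)) Filter.atTop (nhds 0) := by
  rw [tendsto_zero_iff_norm_tendsto_zero]
  refine (Real.tendsto_pow_mul_exp_neg_atTop_nhds_zero k).congr' ?_
  filter_upwards [Filter.eventually_gt_atTop 0] with x hx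
  simp [Complex.norm_exp, hb, abs_of_pos hx]

lemma gi_value (k : ℕ) (b : ℂ) (hb : b.re = 1) :
    ∫ x : ℝ in Set.Ioi 0, (x : ℂ) ^ k * Complex.exp (-b * x) = k.factorial / b ^ (k + 1) := by
  have hb0 : b ≠ 0 := by rintro rfl; simp at hb
  have hd : ∀ x : ℝ, HasDerivAt (fun x : ℝ => Complex.exp (-b * x)) (-b * Complex.exp (-b * x)) x := by
    intro x
    have := (((hasDerivAt_id (x:ℂ)).const_mul (-b)).cexp).comp_ofReal
    simpa [mul_comm] using this
  induction k with
  | zero =>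
    have h0 := gi_integrable 0 b hb
    have := integral_Ioi_of_hasDerivAt_of_tendsto (f := fun x : ℝ => Complex.exp (-b * x))
      (f' := fun x : ℝ => -b * Complex.exp (-b * x)) (a := 0) (m := 0)
      (by fun_prop) (fun x _ => hd x) 
      (by simpa [IntegrableOn] using h0.const_mul (-b)) (by simpa using gi_tendsto 0 b hb)
    rw [integral_const_mul] at this
    simp at this ⊢
    field_simp
    linear_combination this
  | succ k ih =>
    have h0 := (gi_integrable k b hb).const_mul (k + 1 : ℂ)
    have h1 := (gi_integrable (k+1) b hb).const_mul b
    have := integral_Ioi_of_hasDerivAt_of_tendsto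
      (f := fun x : ℝ => (x:ℂ) ^ (k+1) * Complex.exp (-b * x))
      (f' := fun x : ℝ => (k + 1 : ℂ) * ((x:ℂ) ^ k * Complex.exp (-b * x)) - 
          b * ((x:ℂ) ^ (k+1) * Complex.exp (-b * x))) (a := 0) (m := 0)
      (by fun_prop) (fun x _ => by
        have hp := ((hasDerivAt_id (x:ℂ)).pow (k+1)).comp_ofReal
        refine (hp.mul (hd x)).congr_deriv ?_
        simp only [id, Nat.add_sub_cancel, Pi.pow_apply]
        push_cast
        ring) 
      (h0.sub h1) (gi_tendsto (k+1) b hb)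
    rw [integral_sub h0 h1, integral_const_mul, integral_const_mul, ih] at this
    simp only [Complex.ofReal_zero, ne_eq, Nat.add_eq_zero_iff, one_ne_zero, and_false, not_false_eq_true, zero_pow, zero_mul, sub_zero] at this
    rw [Nat.factorial_succ]
    push_cast
    have h2 : b * ∫ x : ℝ in Set.Ioi 0, (x : ℂ) ^ (k+1) * Complex.exp (-b * x) 
       = (k + 1) * (k.factorial / b ^ (k + 1)) := by linear_combination -this
    rw [pow_succ b (k+1), eq_div_iff (by positivity), mul_comm (b ^ (k+1)) b, ← mul_assoc, mul_comm _ b, h2]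
    field_simp

lemma charFun_gammaM (k : ℕ) (t : ℝ) :
    charFun (gammaMeasure (k + 1 : ℝ) 1) t = ((1 - t * Complex.I)⁻¹) ^ (k + 1) := by
  rw [charFun_apply_real, gamma_integral]
  have := gi_value k (1 - t * Complex.I) (by simp)
  have hk : (k.factorial : ℂ) ≠ 0 := by exact_mod_cast k.factorial_ne_zero
  calc _ = ∫ x : ℝ in Set.Ioi 0, (k.factorial : ℂ)⁻¹ * ((x : ℂ) ^ k * Complex.exp (-(1 - t * Complex.I) * x)) := by
        congr 1; ext x
        simp only [Complex.real_smul]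
        push_cast
        rw [show -(1 - t * Complex.I) * x = -x + t * x * Complex.I by ring, Complex.exp_add]
        ring
    _ = _ := by
        rw [integral_const_mul, this, inv_pow]
        field_simp

lemma integral_stdCG {E : Type*} [NormedAddCommGroup E] [NormedSpace ℝ E] (f : ℂ → E) (hf : Continuous f) :
    ∫ z, f z ∂stdCGaussian = ∫ p : ℝ × ℝ, f ((p.1 : ℂ) + p.2 * Complex.I) ∂((gaussianReal 0 (1/2)).prod (gaussianReal 0 (1/2))) := by
  rw [stdCGaussian, integral_map]
  · fun_prop
  · exact hf.aestronglyMeasurable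

instance : IsProbabilityMeasure stdCGaussian := by
  unfold stdCGaussian
  exact Measure.isProbabilityMeasure_map (by fun_prop)

instance (n : ℕ) : IsProbabilityMeasure (stdCGaussianVec n) := by
  unfold stdCGaussianVec
  infer_instance

lemma gauss_sq (t : ℝ) : ∫ x : ℝ, Complex.exp (t * (x:ℂ)^2 * Complex.I) ∂(gaussianReal 0 (1/2)) 
    = ((√π : ℝ) : ℂ)⁻¹ * (π / (1 - t * Complex.I)) ^ (1/2 : ℂ) := by
  rw [integral_gaussianReal_eq_integral_smul (by norm_num),
    ← integral_gaussian_complex (b := 1 - t * Complex.I) (by simp), ← integral_const_mul]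
  congr 1; ext x
  rw [gaussianPDFReal, Complex.real_smul]
  push_cast
  rw [show -(1 - t * Complex.I) * (x:ℂ)^2 = -x^2 + t * x^2 * Complex.I by ring, Complex.exp_add]
  have h2 : ((√2 : ℝ) : ℂ) ≠ 0 := by exact_mod_cast (by positivity : √2 ≠ 0)
  norm_num
  field_simp

lemma stdCG_sq (t : ℝ) : ∫ z : ℂ, Complex.exp (t * (‖z‖^2 : ℝ) * Complex.I) ∂stdCGaussian 
    = (1 - t * Complex.I)⁻¹ := by
  rw [integral_stdCG _ (by fun_prop)]
  have : ∀ p : ℝ × ℝ, Complex.exp (t * (‖(p.1 : ℂ) + p.2 * Complex.I‖^2 : ℝ) * Complex.I) = 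
     Complex.exp (t * (p.1:ℂ)^2 * Complex.I) * Complex.exp (t * (p.2:ℂ)^2 * Complex.I) := by
    intro p
    rw [← Complex.exp_add, Complex.sq_norm, Complex.normSq_add_mul_I]
    push_cast
    ring_nf
  simp_rw [this]
  rw [integral_prod_mul (fun x : ℝ => Complex.exp (t * (x:ℂ)^2 * Complex.I)) (fun x : ℝ => Complex.exp (t * (x:ℂ)^2 * Complex.I)), gauss_sq]
  have h1 : (1 - t * Complex.I) ≠ 0 := by
    intro h; have := congrArg Complex.re h; simp at this
  have h2 : (π / (1 - t * Complex.I)) ≠ 0 := div_ne_zero (by exact_mod_cast Real.pi_ne_zero) h1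
  rw [mul_mul_mul_comm, ← Complex.cpow_add _ _ h2, ← mul_inv, ← Complex.ofReal_mul, Real.mul_self_sqrt Real.pi_pos.le]
  norm_num
  field_simp

lemma law_normSq (k : ℕ) : (stdCGaussianVec (k+1)).map (fun z => ∑ i, ‖z i‖^2) = gammaMeasure (k + 1 : ℝ) 1 := by
  have hm : Measurable (fun z : Fin (k+1) → ℂ => ∑ i, ‖z i‖^2) := by fun_prop
  have : IsProbabilityMeasure (gammaMeasure (k + 1 : ℝ) 1) := isProbabilityMeasure_gammaMeasure (by positivity) one_pos
  have : IsProbabilityMeasure ((stdCGaussianVec (k+1)).map (fun z => ∑ i, ‖z i‖^2)) := 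
    Measure.isProbabilityMeasure_map hm.aemeasurable
  apply Measure.ext_of_charFun
  ext t
  rw [charFun_gammaM, charFun_apply_real, integral_map hm.aemeasurable (by fun_prop), ← stdCG_sq]
  have h := integral_fintype_prod_eq_pow (ι := Fin (k+1)) (μ := stdCGaussian) (fun z : ℂ => Complex.exp (t * (‖z‖^2 : ℝ) * Complex.I))
  rw [Fintype.card_fin] at h
  rw [← h, stdCGaussianVec]
  congr 1; ext z
  rw [← Complex.exp_sum]
  push_cast
  rw [Finset.mul_sum, Finset.sum_mul]

lemma mellin_log (k : ℕ) : 
    IntegrableOn (fun t : ℝ => t ^ k * Real.exp (-t) * Real.log t) (Set.Ioi 0) ∧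
    ∫ t in Set.Ioi (0:ℝ), t ^ k * Real.exp (-t) * Real.log t = 
      k.factorial * (-Real.eulerMascheroniConstant + harmonic k) := by
  have hs : (0:ℝ) < ((k:ℂ) + 1).re := by simp; positivity
  have H := (mellin_hasDerivAt_of_isBigO_rpow (E := ℂ) (f := fun x : ℝ => ((Real.exp (-x) : ℝ) : ℂ)) (s := (k:ℂ)+1)
    (a := ((k:ℂ)+1).re + 1) (b := 0)
    ((Complex.continuous_ofReal.comp (Real.continuous_exp.comp continuous_neg)).continuousOn.locallyIntegrableOn measurableSet_Ioi)
    (by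
      rw [← Asymptotics.isBigO_norm_left]
      simp_rw [Complex.norm_real, Asymptotics.isBigO_norm_left]
      simpa only [neg_one_mul] using (isLittleO_exp_neg_mul_rpow_atTop zero_lt_one _).isBigO)
    (lt_add_one _) 
    (by
      simp_rw [neg_zero, rpow_zero]
      refine Asymptotics.isBigO_const_of_tendsto (?_ : Filter.Tendsto _ _ (nhds (1 : ℂ))) one_ne_zero
      rw [(by simp : (1 : ℂ) = Real.exp (-0))]
      exact (Complex.continuous_ofReal.comp (Real.continuous_exp.comp continuous_neg)).continuousWithinAt)
    hs)
  obtain ⟨H1, H2⟩ := H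
  have hc : ∀ t : ℝ, (t:ℂ) ^ ((k:ℂ) + 1 - 1) • (Real.log t • ((Real.exp (-t) : ℝ) : ℂ)) = 
      ((t ^ k * Real.exp (-t) * Real.log t : ℝ) : ℂ) := by
    intro t
    rw [add_sub_cancel_right, Complex.cpow_natCast]
    simp only [smul_eq_mul, Complex.real_smul]
    push_cast
    ring
  rw [MellinConvergent] at H1
  simp_rw [hc] at H1
  rw [mellin] at H2
  simp_rw [hc] at H2
  refine ⟨?_, ?_⟩
  · refine Integrable.congr H1.re (ae_of_all _ fun x => ?_)
    exact Complex.ofReal_re _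
  · rw [← Complex.GammaIntegral_eq_mellin] at H2
    have hev : Complex.Gamma =ᶠ[nhds ((k:ℂ)+1)] Complex.GammaIntegral := by
      have : IsOpen {s : ℂ | 0 < s.re} := Complex.continuous_re.isOpen_preimage _ isOpen_Ioi
      filter_upwards [this.mem_nhds hs] with a ha using Complex.Gamma_eq_integral ha
    have := (H2.congr_of_eventuallyEq hev).unique (Complex.hasDerivAt_Gamma_nat k)
    rw [integral_complex_ofReal] at this
    exact_mod_cast this

lemma log_normSq (k : ℕ) : Integrable (fun z => Real.log (∑ i, ‖z i‖^2)) (stdCGaussianVec (k+1)) ∧ 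
    ∫ z, Real.log (∑ i, ‖z i‖^2) ∂(stdCGaussianVec (k+1)) = -Real.eulerMascheroniConstant + harmonic k := by
  have hm : Measurable (fun z : Fin (k+1) → ℂ => ∑ i, ‖z i‖^2) := by fun_prop
  have h1 := gamma_integrable k Real.log (mellin_log k).1
  rw [← law_normSq] at h1
  refine ⟨(integrable_map_measure (by fun_prop) hm.aemeasurable).1 h1, ?_⟩
  rw [← integral_map hm.aemeasurable (f := Real.log) (by fun_prop), law_normSq, gamma_integral]
  have : ∀ x : ℝ, (x ^ k * Real.exp (-x) / (k.factorial : ℝ)) • Real.log x = (k.factorial : ℝ)⁻¹ * (x ^ k * Real.exp (-x) * Real.log x) := by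
    intro x; rw [smul_eq_mul]; ring
  simp_rw [this]
  rw [integral_const_mul, (mellin_log k).2]
  field_simp

lemma stdCG_lin (w : ℂ) : ∫ z : ℂ, Complex.exp ((w * z).re * Complex.I) ∂stdCGaussian 
    = Complex.exp (-(‖w‖^2 : ℝ) / 4) := by
  rw [integral_stdCG _ (by fun_prop)]
  have : ∀ p : ℝ × ℝ, Complex.exp ((w * ((p.1 : ℂ) + p.2 * Complex.I)).re * Complex.I) = 
     Complex.exp (w.re * (p.1:ℂ) * Complex.I) * Complex.exp ((-w.im : ℝ) * (p.2:ℂ) * Complex.I) := by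
    intro p
    rw [← Complex.exp_add]
    simp
    ring_nf
  simp_rw [this]
  rw [integral_prod_mul (fun x : ℝ => Complex.exp (w.re * (x:ℂ) * Complex.I)) (fun x : ℝ => Complex.exp ((-w.im : ℝ) * (x:ℂ) * Complex.I)), ← charFun_apply_real, ← charFun_apply_real, charFun_gaussianReal, charFun_gaussianReal, ← Complex.exp_add, Complex.sq_norm, Complex.normSq_apply]
  push_cast
  congr 1
  ring

lemma law_lin {r : ℕ} (c : Fin r → ℂ) : 
    (stdCGaussianVec r).map (fun z => ∑ i, c i * z i) = 
    stdCGaussian.map (fun z => ((√(∑ i, ‖c i‖^2) : ℝ) : ℂ) * z) := by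
  have hm : Measurable (fun z : Fin r → ℂ => ∑ i, c i * z i) := by fun_prop
  have hm2 : Measurable (fun z : ℂ => ((√(∑ i, ‖c i‖^2) : ℝ) : ℂ) * z) := by fun_prop
  have : IsProbabilityMeasure ((stdCGaussianVec r).map (fun z => ∑ i, c i * z i)) := 
    Measure.isProbabilityMeasure_map hm.aemeasurable
  have : IsProbabilityMeasure (stdCGaussian.map (fun z => ((√(∑ i, ‖c i‖^2) : ℝ) : ℂ) * z)) := 
    Measure.isProbabilityMeasure_map hm2.aemeasurable
  apply Measure.ext_of_charFun
  ext t
  rw [charFun_apply, charFun_apply, integral_map hm.aemeasurable (by fun_prop), integral_map hm2.aemeasurable (by fun_prop)]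
  have e1 : ∀ z : ℂ, Complex.exp ((inner ℝ (((√(∑ i, ‖c i‖^2) : ℝ) : ℂ) * z) t : ℝ) * Complex.I) = 
     Complex.exp ((((((√(∑ i, ‖c i‖^2) : ℝ) : ℂ) * star t) * z).re : ℝ) * Complex.I) := by
    intro z
    congr 3
    simp [Complex.inner]
    ring
  have e2 : ∀ z : Fin r → ℂ, Complex.exp ((inner ℝ (∑ i, c i * z i) t : ℝ) * Complex.I) = 
     ∏ i, Complex.exp (((c i * star t) * z i).re * Complex.I) := by
    intro z
    rw [← Complex.exp_sum, ← Finset.sum_mul, sum_inner]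
    push_cast
    congr 3
    ext i
    congr 1
    simp [Complex.inner]
    ring
  simp_rw [e1, e2]
  rw [stdCG_lin, stdCGaussianVec, integral_fintype_prod_eq_prod (fun i (z : ℂ) => Complex.exp (((c i * star t) * z).re * Complex.I))]
  simp_rw [stdCG_lin]
  rw [← Complex.exp_sum]
  congr 1
  have hp : 0 ≤ ∑ i, ‖c i‖^2 := by positivity
  simp only [norm_mul, mul_pow, norm_star, Complex.norm_real, Real.norm_eq_abs, sq_abs, Real.sq_sqrt hp]
  push_cast
  rw [Finset.sum_mul, ← Finset.sum_div, ← Finset.sum_neg_distrib]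

lemma log_one : Integrable (fun z => Real.log (‖z‖^2)) stdCGaussian ∧ 
    ∫ z, Real.log (‖z‖^2) ∂stdCGaussian = -Real.eulerMascheroniConstant := by
  have h := log_normSq 0
  have hl := measurePreserving_eval (fun _ : Fin 1 => stdCGaussian) 0
  have hm : Measurable (fun z : ℂ => Real.log (‖z‖^2)) := by fun_prop
  have hsum : ∀ z : Fin (0+1) → ℂ, ∑ i, ‖z i‖^2 = ‖z 0‖^2 := fun z => Fin.sum_univ_one _
  simp_rw [hsum] at h
  simp only [harmonic_zero, Rat.cast_zero, add_zero] at h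
  constructor
  · exact (hl.integrable_comp hm.aestronglyMeasurable).1 h.1
  · rw [← hl.map_eq, integral_map hl.measurable.aemeasurable hm.aestronglyMeasurable]
    exact h.2

lemma stdCG_ne : ∀ᵐ z ∂stdCGaussian, z ≠ 0 := by
  have hl := measurePreserving_eval (fun _ : Fin 1 => stdCGaussian) 0
  have h := law_normSq 0
  have hm : Measurable (fun z : Fin (0+1) → ℂ => ∑ i, ‖z i‖^2) := by fun_prop
  have h0 : ∀ᵐ x ∂(gammaMeasure ((0:ℕ) + 1 : ℝ) 1), x ≠ 0 := by
    rw [gammaMeasure]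
    exact (withDensity_absolutelyContinuous _ _).ae_le (Measure.ae_ne volume 0)
  rw [← h] at h0
  have h1 := ae_of_ae_map hm.aemeasurable h0
  rw [← hl.map_eq, ae_map_iff hl.measurable.aemeasurable (by measurability)]
  filter_upwards [h1] with z hz h
  apply hz
  simpa using h

lemma lin_ne {r : ℕ} (c : Fin r → ℂ) (hc : 0 < ∑ i, ‖c i‖^2) :
    ∀ᵐ z ∂(stdCGaussianVec r), ∑ i, c i * z i ≠ 0 := by
  have hm : Measurable (fun z : Fin r → ℂ => ∑ i, c i * z i) := by fun_prop
  have hm2 : Measurable (fun z : ℂ => ((√(∑ i, ‖c i‖^2) : ℝ) : ℂ) * z) := by fun_prop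
  have hs : (√(∑ i, ‖c i‖^2)) ≠ 0 := by positivity
  apply ae_of_ae_map hm.aemeasurable (p := fun z => z ≠ 0)
  rw [law_lin, ae_map_iff hm2.aemeasurable (by measurability)]
  filter_upwards [stdCG_ne] with z hz
  exact mul_ne_zero (by exact_mod_cast hs) hz

lemma log_lin {r : ℕ} (c : Fin r → ℂ) (hc : 0 < ∑ i, ‖c i‖^2) :
    Integrable (fun z => Real.log (‖∑ i, c i * z i‖^2)) (stdCGaussianVec r) ∧ 
    ∫ z, Real.log (‖∑ i, c i * z i‖^2) ∂(stdCGaussianVec r) = 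
      Real.log (∑ i, ‖c i‖^2) - Real.eulerMascheroniConstant := by
  have hm : Measurable (fun z : Fin r → ℂ => ∑ i, c i * z i) := by fun_prop
  have hm2 : Measurable (fun z : ℂ => ((√(∑ i, ‖c i‖^2) : ℝ) : ℂ) * z) := by fun_prop
  have hs : (√(∑ i, ‖c i‖^2)) ≠ 0 := by positivity
  have hl : Measurable (fun z : ℂ => Real.log (‖z‖^2)) := by fun_prop
  have hae : (fun z : ℂ => Real.log (∑ i, ‖c i‖^2) + Real.log (‖z‖^2)) =ᵐ[stdCGaussian]
      (fun z : ℂ => Real.log (‖((√(∑ i, ‖c i‖^2) : ℝ) : ℂ) * z‖^2)) := by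
    filter_upwards [stdCG_ne] with z hz
    rw [norm_mul, mul_pow, Complex.norm_real, Real.norm_eq_abs, sq_abs, Real.sq_sqrt hc.le, Real.log_mul hc.ne' (by positivity)]
  constructor
  · apply (integrable_map_measure (f := fun z : Fin r → ℂ => ∑ i, c i * z i) (g := fun z : ℂ => Real.log (‖z‖^2)) hl.aestronglyMeasurable hm.aemeasurable).1
    rw [law_lin, integrable_map_measure hl.aestronglyMeasurable hm2.aemeasurable]
    exact ((integrable_const _).add log_one.1).congr hae
  · rw [← integral_map (φ := fun z : Fin r → ℂ => ∑ i, c i * z i) (f := fun z : ℂ => Real.log (‖z‖^2)) hm.aemeasurable hl.aestronglyMeasurable, law_lin, integral_map hm2.aemeasurable hl.aestronglyMeasurable, ← integral_congr_ae hae, integral_add (integrable_const _) log_one.1, log_one.2]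
    simp
    ring

lemma jensen_core {Ω : Type*} [MeasurableSpace Ω] (μ : Measure Ω) [IsProbabilityMeasure μ] (f G : Ω → ℝ)
    (hf : Integrable f μ) (hG : Integrable G μ) (h : ∀ᵐ x ∂μ, Real.exp (G x) ≤ f x) :
    Real.exp (∫ x, G x ∂μ) ≤ ∫ x, f x ∂μ := by
  set m := ∫ x, G x ∂μ with hm
  have hi : Integrable (fun x => Real.exp m * (1 - m + G x)) μ := ((integrable_const _).add hG).const_mul _
  have h1 : ∫ x, Real.exp m * (1 - m + G x) ∂μ = Real.exp m := by
    rw [integral_const_mul, integral_add (integrable_const _) hG, ← hm]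
    simp
  rw [← h1]
  refine integral_mono_ae hi hf ?_
  filter_upwards [h] with x hx
  refine le_trans ?_ hx
  have := Real.add_one_le_exp (G x - m)
  calc Real.exp m * (1 - m + G x) ≤ Real.exp m * Real.exp (G x - m) := by
        gcongr; linarith
    _ = Real.exp (G x) := by rw [← Real.exp_add]; congr 1; ring

/-- normalized coordinate products -/
noncomputable def gg {r : ℕ} (k l : Fin r) (z : Fin r → ℂ) : ℂ := 
  star (z k) * z l / ((∑ i, ‖z i‖^2 : ℝ) : ℂ)

lemma gg_meas {r : ℕ} (k l : Fin r) : Measurable (gg k l) := by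
  unfold gg
  have : Measurable (fun z : Fin r → ℂ => star (z k)) := (continuous_star.measurable).comp (measurable_pi_apply k)
  fun_prop

lemma gg_int {r : ℕ} (k l : Fin r) : Integrable (gg k l) (stdCGaussianVec r) := by
  refine Integrable.of_bound (gg_meas k l).aestronglyMeasurable 1 (ae_of_all _ fun z => ?_)
  unfold gg
  have h0 : 0 ≤ ∑ i, ‖z i‖^2 := by positivity
  rw [norm_div, norm_mul, norm_star, Complex.norm_real, Real.norm_eq_abs, abs_of_nonneg h0]
  apply div_le_one_of_le₀ _ h0
  have h1 : ‖z k‖^2 ≤ ∑ i, ‖z i‖^2 := Finset.single_le_sum (f := fun i => ‖z i‖^2) (fun i _ => by positivity) (mem_univ k)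
  have h2 : ‖z l‖^2 ≤ ∑ i, ‖z i‖^2 := Finset.single_le_sum (f := fun i => ‖z i‖^2) (fun i _ => by positivity) (mem_univ l)
  nlinarith [sq_nonneg (‖z k‖ - ‖z l‖)]

lemma stdCG_neg : MeasurePreserving (fun z : ℂ => -z) stdCGaussian stdCGaussian := by
  refine ⟨measurable_neg, ?_⟩
  have : IsProbabilityMeasure (stdCGaussian.map (fun z => -z)) := 
    Measure.isProbabilityMeasure_map measurable_neg.aemeasurable
  apply Measure.ext_of_charFun
  ext t
  rw [charFun_apply, charFun_apply, integral_map measurable_neg.aemeasurable (by fun_prop)]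
  have e1 : ∀ z : ℂ, Complex.exp ((inner ℝ (-z) t : ℝ) * Complex.I) = 
     Complex.exp (((-star t * z).re : ℝ) * Complex.I) := by
    intro z
    congr 3
    simp [Complex.inner]
  have e2 : ∀ z : ℂ, Complex.exp ((inner ℝ z t : ℝ) * Complex.I) = 
     Complex.exp (((star t * z).re : ℝ) * Complex.I) := by
    intro z
    congr 3
    simp [Complex.inner]
  simp_rw [e1, e2]
  rw [stdCG_lin, stdCG_lin, norm_neg]

lemma gg_off {r : ℕ} (k l : Fin r) (hkl : k ≠ l) : ∫ z, gg k l z ∂(stdCGaussianVec r) = 0 := by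
  have hp : MeasurePreserving (fun (z : Fin r → ℂ) i => (if i = k then (fun w : ℂ => -w) else id) (z i)) 
      (stdCGaussianVec r) (stdCGaussianVec r) := by
    refine measurePreserving_pi (fun _ : Fin r => stdCGaussian) (fun _ => stdCGaussian) (f := fun i => (if i = k then (fun w : ℂ => -w) else id)) fun i => ?_
    split_ifs
    · exact stdCG_neg
    · exact MeasurePreserving.id _
  have h1 : ∫ z, gg k l z ∂(stdCGaussianVec r) = ∫ z, - gg k l z ∂(stdCGaussianVec r) := by
    conv_lhs => rw [← hp.map_eq]
    rw [integral_map hp.measurable.aemeasurable (gg_meas k l).aestronglyMeasurable]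
    congr 1; ext z
    unfold gg
    have : ∀ i, ‖(if i = k then (fun w : ℂ => -w) else id) (z i)‖ = ‖z i‖ := by
      intro i; split_ifs <;> simp
    simp_rw [this]
    simp [hkl.symm]
    ring
  rw [integral_neg] at h1
  exact self_eq_neg.mp h1

lemma gg_diag_eq {r : ℕ} (k l : Fin r) : ∫ z, gg k k z ∂(stdCGaussianVec r) = ∫ z, gg l l z ∂(stdCGaussianVec r) := by
  have hp := measurePreserving_piCongrLeft (fun _ : Fin r => stdCGaussian) (Equiv.swap k l)
  have : ∀ z : Fin r → ℂ, ∀ i, (MeasurableEquiv.piCongrLeft (fun _ : Fin r => ℂ) (Equiv.swap k l)) z i = z (Equiv.swap k l i) := by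
    intro z i
    conv_lhs => rw [← Equiv.swap_apply_self k l i]
    rw [MeasurableEquiv.coe_piCongrLeft]
    exact Equiv.piCongrLeft_apply_apply _ _ _ _
  unfold stdCGaussianVec
  rw [← hp.integral_comp']
  congr 1; ext z
  unfold gg
  simp_rw [this]
  rw [Equiv.sum_comp (Equiv.swap k l) (fun i => ‖z i‖^2)]
  simp

lemma N_pos {r : ℕ} (hr : 0 < r) : ∀ᵐ z ∂(stdCGaussianVec r), 0 < ∑ i, ‖z i‖^2 := by
  have : 0 < ∑ i : Fin r, ‖(1:ℂ)‖^2 := by simp [hr]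
  filter_upwards [lin_ne (fun _ : Fin r => (1:ℂ)) this] with z hz
  refine lt_of_le_of_ne (by positivity) fun h => hz ?_
  have := (Finset.sum_eq_zero_iff_of_nonneg (fun i _ => by positivity)).1 h.symm
  apply Finset.sum_eq_zero
  intro i hi
  simpa using this i hi

lemma gg_diag {r : ℕ} (k : Fin r) : ∫ z, gg k k z ∂(stdCGaussianVec r) = 1 / r := by
  have hr : 0 < r := k.pos
  have h1 : ∑ l : Fin r, ∫ z, gg l l z ∂(stdCGaussianVec r) = 1 := by
    rw [← integral_finsetSum _ (fun l _ => gg_int l l)]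
    have : (fun z => ∑ l : Fin r, gg l l z) =ᵐ[stdCGaussianVec r] fun _ => 1 := by
      filter_upwards [N_pos hr] with z hz
      unfold gg
      rw [← Finset.sum_div, div_eq_one_iff_eq (by exact_mod_cast hz.ne')]
      push_cast
      refine Finset.sum_congr rfl fun i _ => ?_
      exact Complex.conj_mul' _
    rw [integral_congr_ae this]
    simp
  simp_rw [fun l => gg_diag_eq l k] at h1
  simp at h1
  rw [eq_div_iff (by exact_mod_cast hr.ne'), mul_comm]
  exact h1

lemma ratio_eq {r : ℕ} (a z : Fin r → ℂ) : ‖∑ i, a i * z i‖^2 / (∑ i, ‖z i‖^2) = 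
    (∑ k, ∑ l, (star (a k) * a l) * gg k l z).re := by
  rw [← Complex.ofReal_re (‖∑ i, a i * z i‖^2 / (∑ i, ‖z i‖^2))]
  congr 1
  push_cast
  rw [← Complex.conj_mul', map_sum, Finset.sum_mul_sum, Finset.sum_div]
  refine Finset.sum_congr rfl fun k _ => ?_
  rw [Finset.sum_div]
  refine Finset.sum_congr rfl fun l _ => ?_
  unfold gg
  push_cast
  simp only [map_mul, Complex.star_def]
  ring

lemma ratio_int {r : ℕ} (hr : 0 < r) (a : Fin r → ℂ) : 
    Integrable (fun z => ‖∑ i, a i * z i‖^2 / (∑ i, ‖z i‖^2)) (stdCGaussianVec r) ∧ 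
    ∫ z, ‖∑ i, a i * z i‖^2 / (∑ i, ‖z i‖^2) ∂(stdCGaussianVec r) = (∑ i, ‖a i‖^2) / r := by
  simp_rw [ratio_eq]
  have hi : Integrable (fun z => ∑ k, ∑ l, (star (a k) * a l) * gg k l z) (stdCGaussianVec r) := 
    integrable_finsetSum _ fun k _ => integrable_finsetSum _ fun l _ => (gg_int k l).const_mul _
  refine ⟨hi.re, ?_⟩
  have := integral_re hi
  refine this.trans ?_
  rw [integral_finsetSum _ (fun k _ => integrable_finsetSum _ fun l _ => (gg_int k l).const_mul _)]
  simp_rw [integral_finsetSum _ (fun l _ => (gg_int _ l).const_mul _), integral_const_mul]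
  have h : ∀ k l : Fin r, (star (a k) * a l) * ∫ z, gg k l z ∂(stdCGaussianVec r) = if k = l then (‖a k‖^2 : ℂ) / r else 0 := by
    intro k l
    split_ifs with h
    · subst h
      rw [gg_diag, Complex.star_def, Complex.conj_mul']
      ring
    · rw [gg_off k l h, mul_zero]
  simp_rw [h]
  simp only [Finset.sum_ite_eq, mem_univ, if_true]
  rw [← Finset.sum_div]
  have : (∑ i, (‖a i‖^2 : ℂ)) / r = (((∑ i, ‖a i‖^2) / r : ℝ) : ℂ) := by push_cast; rfl
  rw [this]
  exact Complex.ofReal_re _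

theorem stmt13 (n r : ℕ) (hn : 0 < n) (hr : 0 < r)
    (V : Matrix (Fin n) (Fin n) ℂ) (U : Matrix (Fin n) (Fin r) ℂ)
    (P : Matrix (Fin n) (Fin n) ℂ)
    (hPU : P = U * Uᴴ) (hP : P.PosSemidef) (htr : P.trace = n) (hrank : P.rank = r) :
    Real.exp (-(n : ℝ) * ((harmonic (r - 1) : ℝ) - Real.log r)) *
        ∏ i, (star (fun j => V j i) ⬝ᵥ P.mulVec (fun j => V j i)).re ≤
      ∫ z, ∏ i, ‖star (fun j => V j i) ⬝ᵥ
            ((Real.sqrt n / Real.sqrt (∑ j, ‖U.mulVec z j‖ ^ 2)) • U.mulVec z)‖ ^ 2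
        ∂(stdCGaussianVec r) := by
  have hnR : (0:ℝ) < n := by exact_mod_cast hn
  have hrR : (0:ℝ) < r := by exact_mod_cast hr
  set u : Fin n → Fin r → ℂ := fun i => star (fun j => V j i) ᵥ* U with hu
  set M : (Fin r → ℂ) → ℝ := fun z => ∑ j, ‖U.mulVec z j‖ ^ 2 with hM
  have hM0 : ∀ z, 0 ≤ M z := fun z => by positivity
  have hq : ∀ i, (star (fun j => V j i) ⬝ᵥ P.mulVec (fun j => V j i)).re = ∑ k, ‖u i k‖^2 := by
    intro i
    rw [hPU, ← Matrix.mulVec_mulVec, Matrix.dotProduct_mulVec]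
    have : Uᴴ *ᵥ (fun j => V j i) = star (u i) := by
      rw [hu]; simp only [Matrix.star_vecMul, star_star]
    rw [this]
    change (u i ⬝ᵥ star (u i)).re = _
    simp only [dotProduct, Pi.star_apply, Complex.star_def, Complex.mul_conj', Complex.re_sum]
    refine Finset.sum_congr rfl fun k _ => ?_
    rw [← Complex.ofReal_pow, Complex.ofReal_re]
  have htr' : ∑ j, ∑ k, ‖U j k‖^2 = (n:ℝ) := by
    have h1 : P.trace = ((∑ j, ∑ k, ‖U j k‖^2 : ℝ) : ℂ) := by
      rw [hPU]
      simp only [Matrix.trace, Matrix.diag, Matrix.mul_apply, Matrix.conjTranspose_apply, Complex.star_def, Complex.mul_conj']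
      push_cast; rfl
    rw [h1] at htr
    exact_mod_cast htr
  have hint : ∀ z i, ‖star (fun j => V j i) ⬝ᵥ
            ((Real.sqrt n / Real.sqrt (M z)) • U.mulVec z)‖ ^ 2 = n / M z * ‖∑ k, u i k * z k‖^2 := by
    intro z i
    rw [dotProduct_smul, norm_smul, mul_pow, Real.norm_eq_abs, sq_abs, div_pow, Real.sq_sqrt hnR.le, Real.sq_sqrt (hM0 z), Matrix.dotProduct_mulVec]
    rfl
  simp_rw [hq]
  change _ ≤ ∫ z, ∏ i, ‖star (fun j => V j i) ⬝ᵥ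
            ((Real.sqrt n / Real.sqrt (M z)) • U.mulVec z)‖ ^ 2 ∂(stdCGaussianVec r)
  by_cases hz : ∃ i, ∑ k, ‖u i k‖^2 = 0
  · obtain ⟨i, hi⟩ := hz
    rw [Finset.prod_eq_zero (mem_univ i) hi, mul_zero]
    exact integral_nonneg fun z => by positivity
  push Not at hz
  have hp : ∀ i, 0 < ∑ k, ‖u i k‖^2 := fun i => lt_of_le_of_ne (by positivity) (hz i).symm
  have hMm : Measurable M := by
    rw [hM]
    simp only [Matrix.mulVec, dotProduct]
    fun_prop
  -- integrability
  have hf : Integrable (fun z => ∏ i, ‖star (fun j => V j i) ⬝ᵥ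
            ((Real.sqrt n / Real.sqrt (M z)) • U.mulVec z)‖ ^ 2) (stdCGaussianVec r) := by
    refine Integrable.of_bound ?_ (∏ i, (n * ∑ j, ‖V j i‖^2)) (ae_of_all _ fun z => ?_)
    · simp_rw [hint]
      have : Measurable (fun z : Fin r → ℂ => ∏ i, (n / M z * ‖∑ k, u i k * z k‖^2)) := by fun_prop
      exact this.aestronglyMeasurable
    · rw [Real.norm_eq_abs, abs_of_nonneg (by positivity)]
      refine Finset.prod_le_prod (fun i _ => by positivity) fun i _ => ?_
      have hcs : ‖∑ k, u i k * z k‖^2 ≤ (∑ j, ‖V j i‖^2) * M z := by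
        have e : ∑ k, u i k * z k = ∑ j, star (V j i) * U.mulVec z j := by
          change u i ⬝ᵥ z = star (fun j => V j i) ⬝ᵥ U.mulVec z
          rw [Matrix.dotProduct_mulVec]
        rw [e]
        calc _ ≤ (∑ j, ‖V j i‖ * ‖U.mulVec z j‖)^2 := by
              gcongr
              refine (norm_sum_le _ _).trans (le_of_eq ?_)
              simp
          _ ≤ _ := Finset.sum_mul_sq_le_sq_mul_sq _ _ _
      rw [hint]
      rcases (hM0 z).eq_or_lt with h | h
      · rw [← h]; simp; positivity
      · rw [div_mul_eq_mul_div, div_le_iff₀ h, mul_assoc]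
        gcongr
  -- the exponent
  set N : (Fin r → ℂ) → ℝ := fun z => ∑ k, ‖z k‖^2 with hN
  obtain ⟨k, rfl⟩ : ∃ k, r = k + 1 := ⟨r - 1, by omega⟩
  have hlogN := log_normSq k
  have hMN : Integrable (fun z => M z / N z) (stdCGaussianVec (k+1)) ∧ 
      ∫ z, M z / N z ∂(stdCGaussianVec (k+1)) = n / ((k+1 : ℕ) : ℝ) := by
    have e : ∀ z, M z / N z = ∑ j, ‖∑ k, U j k * z k‖^2 / N z := by
      intro z; rw [← Finset.sum_div]; rfl
    simp_rw [e]
    refine ⟨integrable_finsetSum _ fun j _ => (ratio_int hr (U j)).1, ?_⟩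
    rw [integral_finsetSum _ fun j _ => (ratio_int hr (U j)).1]
    simp_rw [fun j => (ratio_int hr (U j)).2]
    rw [← Finset.sum_div, htr']
  set R : ℝ := ((k+1 : ℕ) : ℝ) with hR
  have hI1 : Integrable (fun z => ∑ i, Real.log (‖∑ k, u i k * z k‖^2)) (stdCGaussianVec (k+1)) := 
    integrable_finsetSum _ fun i _ => (log_lin (u i) (hp i)).1
  have hI2 : Integrable (fun z => (n:ℝ) * (Real.log (N z))) (stdCGaussianVec (k+1)) := hlogN.1.const_mul _
  have hI3 : Integrable (fun z => R * (M z / N z)) (stdCGaussianVec (k+1)) := hMN.1.const_mul _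
  have hI4 : Integrable (fun z : Fin (k+1) → ℂ => (n:ℝ) * (Real.log R + 1)) (stdCGaussianVec (k+1)) := integrable_const _
  have hI12 : Integrable (fun z => ∑ i, Real.log (‖∑ k, u i k * z k‖^2) - (n:ℝ) * (Real.log (N z)))
      (stdCGaussianVec (k+1)) := hI1.sub hI2
  have hI123 : Integrable (fun z => ∑ i, Real.log (‖∑ k, u i k * z k‖^2) - (n:ℝ) * (Real.log (N z))
      - R * (M z / N z)) (stdCGaussianVec (k+1)) := hI12.sub hI3
  have key := jensen_core (stdCGaussianVec (k+1)) _ 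
    (fun z => (∑ i, Real.log (‖∑ k, u i k * z k‖^2)) - n * (Real.log (N z)) - R * (M z / N z) 
      + n * (Real.log R + 1)) hf (hI123.add hI4) ?_
  · refine le_trans (le_of_eq ?_) key
    have hval : ∫ z, ((∑ i, Real.log (‖∑ k, u i k * z k‖^2)) - n * (Real.log (N z)) - R * (M z / N z) 
      + n * (Real.log R + 1)) ∂(stdCGaussianVec (k+1)) = 
        -(n:ℝ) * ((harmonic (k + 1 - 1) : ℝ) - Real.log R) + ∑ i, Real.log (∑ k, ‖u i k‖^2) := by
      rw [integral_add hI123 hI4, integral_sub hI12 hI3, integral_sub hI1 hI2,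
        integral_const_mul, integral_const_mul, hMN.2, hlogN.2, integral_finsetSum _ fun i _ => (log_lin (u i) (hp i)).1]
      simp_rw [fun i => (log_lin (u i) (hp i)).2]
      rw [Finset.sum_sub_distrib]
      simp only [sum_const, card_univ, Fintype.card_fin, nsmul_eq_mul, integral_const, probReal_univ, smul_eq_mul, Nat.add_sub_cancel]
      field_simp
      ring
    rw [hval, Real.exp_add, Real.exp_sum]
    congr 1
    exact Finset.prod_congr rfl fun i _ => (Real.exp_log (hp i)).symm
  · have hall : ∀ᵐ z ∂(stdCGaussianVec (k+1)), ∀ i, ∑ k, u i k * z k ≠ 0 := 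
      ae_all_iff.2 fun i => lin_ne (u i) (hp i)
    filter_upwards [hall, N_pos hr] with z hz1 hNz
    have hMz : 0 < M z := by
      refine lt_of_le_of_ne (hM0 z) fun h => hz1 ⟨0, hn⟩ ?_
      have h0 := (Finset.sum_eq_zero_iff_of_nonneg (fun i _ => by positivity)).1 h.symm
      have h1 : U.mulVec z = 0 := by
        ext j
        simpa using h0 j (mem_univ j)
      change (star (fun j => V j ⟨0, hn⟩) ᵥ* U) ⬝ᵥ z = 0
      rw [← Matrix.dotProduct_mulVec, h1, dotProduct_zero]
    have hNz' : 0 < N z := hNz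
    simp_rw [hint]
    have hpos : ∀ i, 0 < n / M z * ‖∑ k, u i k * z k‖^2 := fun i => by
      have := hz1 i
      positivity
    have e : ∏ i, (n / M z * ‖∑ k, u i k * z k‖^2) = Real.exp (∑ i, (Real.log n - Real.log (M z) + Real.log (‖∑ k, u i k * z k‖^2))) := by
      rw [Real.exp_sum]
      refine Finset.prod_congr rfl fun i _ => ?_
      have := hz1 i
      rw [← Real.log_div hnR.ne' hMz.ne', ← Real.log_mul (by positivity) (by positivity), Real.exp_log (hpos i)]
    rw [e, Real.exp_le_exp, Finset.sum_add_distrib]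
    have hl := Real.log_le_sub_one_of_pos (x := R / n * (M z / N z)) (by positivity)
    rw [Real.log_mul (by positivity) (by positivity), Real.log_div hrR.ne' hnR.ne', Real.log_div hMz.ne' hNz'.ne'] at hl
    have hl2 := mul_le_mul_of_nonneg_left hl hnR.le
    have e3 : (n:ℝ) * (R / n * (M z / N z) - 1) = R * (M z / N z) - n := by
      field_simp
    rw [e3] at hl2
    simp only [sum_const, card_univ, Fintype.card_fin, nsmul_eq_mul]
    linarith
end

section
/- Let A = V†V be an n×n Hermitian positive semidefinite complex matrix with columns v_i of V, and let x ~ 𝒞𝒩(0, I_n) be a standard circularly-symmetric complex Gaussian vector. Then per(A) = E_x[∏_{i=1}^n |⟨v_i, x⟩|²]. -/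
open MeasureTheory ProbabilityTheory Matrix Finset

/-- The permanent of a square matrix. -/
noncomputable def perm {ι : Type*} [Fintype ι] [DecidableEq ι]
    (A : Matrix ι ι ℂ) : ℂ :=
  ∑ σ : Equiv.Perm ι, ∏ i, A i (σ i)

/-- Complex Gaussian as a density with respect to Lebesgue measure. -/
lemma stdCGaussian_eq : stdCGaussian =
    volume.withDensity (fun z : ℂ => ENNReal.ofReal (Real.pi⁻¹ * Real.exp (-‖z‖ ^ 2))) := by
  have hm : Measurable (fun z : ℂ => ENNReal.ofReal (Real.pi⁻¹ * Real.exp (-‖z‖ ^ 2))) := by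
    fun_prop
  have hf : (fun p : ℝ × ℝ => (p.1 : ℂ) + p.2 * Complex.I)
      = Complex.measurableEquivRealProd.symm := by
    ext p
    apply Complex.ext <;> simp [Complex.measurableEquivRealProd]
  have hv := Complex.volume_preserving_equiv_real_prod.symm
  unfold stdCGaussian
  rw [gaussianReal_of_var_ne_zero _ (by simp),
    prod_withDensity (measurable_gaussianPDF _ _) (measurable_gaussianPDF _ _), hf]
  rw [← hv.map_eq]
  ext s hs
  rw [Measure.map_apply (MeasurableEquiv.measurable _) hs,
    withDensity_apply _ (MeasurableEquiv.measurable _ hs), withDensity_apply _ hs,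
    setLIntegral_map hs hm (MeasurableEquiv.measurable _)]
  refine lintegral_congr fun p => ?_
  rw [gaussianPDF, gaussianPDF, ← ENNReal.ofReal_mul (gaussianPDFReal_nonneg _ _ _)]
  congr 1
  have h1 : ‖Complex.measurableEquivRealProd.symm p‖ ^ 2 = p.1 ^ 2 + p.2 ^ 2 := by
    rw [← Complex.normSq_eq_norm_sq, Complex.normSq_apply]
    simp [Complex.measurableEquivRealProd]
    ring
  rw [h1, gaussianPDFReal, gaussianPDFReal]
  have h2 : (√(2 * Real.pi * ((1 / 2 : NNReal) : ℝ)))⁻¹ * (√(2 * Real.pi * ((1 / 2 : NNReal) : ℝ)))⁻¹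
      = Real.pi⁻¹ := by
    rw [← mul_inv, Real.mul_self_sqrt (by positivity)]
    congr 1
    push_cast
    ring
  rw [mul_mul_mul_comm, h2, ← Real.exp_add]
  congr 2
  simp
  ring

instance inst_s14 : IsProbabilityMeasure stdCGaussian := by
  unfold stdCGaussian
  exact Measure.isProbabilityMeasure_map (by fun_prop)

lemma integral_std (g : ℂ → ℂ) : ∫ z, g z ∂stdCGaussian =
    ∫ z : ℂ, (Real.pi⁻¹ * Real.exp (-‖z‖ ^ 2)) • g z := by
  rw [stdCGaussian_eq, integral_withDensity_eq_integral_toReal_smul (by fun_prop) (by simp)]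
  refine integral_congr_ae (.of_forall fun z => ?_)
  simp only
  rw [ENNReal.toReal_ofReal (by positivity)]

lemma integral_norm_pow (k : ℕ) : ∫ z : ℂ, ‖z‖ ^ k * Real.exp (-‖z‖ ^ 2) =
    Real.pi * Real.Gamma ((k + 2) / 2) := by
  have := Complex.integral_rpow_mul_exp_neg_rpow (p := 2) (q := k) (by norm_num)
    (by have : (0:ℝ) ≤ k := by positivity
        linarith)
  simp only [Real.rpow_natCast, Real.rpow_two] at this
  rw [this]; ring

lemma integrable_mono (a b : ℕ) :
    Integrable (fun z : ℂ => z ^ a * (starRingEnd ℂ z) ^ b) stdCGaussian := by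
  rw [stdCGaussian_eq, integrable_withDensity_iff_integrable_smul' (by fun_prop) (by simp)]
  have h : Integrable (fun z : ℂ => ‖z‖ ^ (a + b) * Real.exp (-‖z‖ ^ 2)) := by
    apply Integrable.of_integral_ne_zero
    rw [integral_norm_pow]
    have := Real.Gamma_pos_of_pos (s := (((a + b : ℕ) : ℝ) + 2) / 2) (by positivity)
    positivity
  have hm1 : Measurable fun z : ℂ =>
      (ENNReal.ofReal (Real.pi⁻¹ * Real.exp (-‖z‖ ^ 2))).toReal := by fun_prop
  have hm2 : Measurable fun z : ℂ => z ^ a * (starRingEnd ℂ z) ^ b :=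
    (by fun_prop : Continuous fun z : ℂ => z ^ a * (starRingEnd ℂ z) ^ b).measurable
  refine (h.const_mul Real.pi⁻¹).mono' (hm1.smul hm2).aestronglyMeasurable (.of_forall fun z => ?_)
  rw [ENNReal.toReal_ofReal (by positivity), norm_smul, norm_mul (z ^ a), norm_pow, norm_pow,
    RCLike.norm_conj, Real.norm_of_nonneg (by positivity), pow_add]
  apply le_of_eq; ring

lemma moment_eq (a : ℕ) :
    ∫ z, z ^ a * (starRingEnd ℂ z) ^ a ∂stdCGaussian = (a.factorial : ℂ) := by
  rw [integral_std]
  have : ∀ z : ℂ, (Real.pi⁻¹ * Real.exp (-‖z‖ ^ 2)) • (z ^ a * (starRingEnd ℂ z) ^ a)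
      = ((Real.pi⁻¹ * (‖z‖ ^ (2 * a) * Real.exp (-‖z‖ ^ 2)) : ℝ) : ℂ) := by
    intro z
    rw [← mul_pow, Complex.mul_conj', Complex.real_smul, pow_mul]
    push_cast
    ring
  simp_rw [this]
  rw [integral_complex_ofReal, integral_const_mul, integral_norm_pow]
  have h2 : (((2 * a : ℕ) : ℝ) + 2) / 2 = a + 1 := by push_cast; ring
  rw [h2, Real.Gamma_nat_eq_factorial, inv_mul_cancel_left₀ Real.pi_ne_zero]
  simp

lemma moment_ne_aux (a b : ℕ) (c : ℂ) (hc : ‖c‖ = 1)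
    (h : c ^ a * (starRingEnd ℂ c) ^ b ≠ 1) :
    ∫ z, z ^ a * (starRingEnd ℂ z) ^ b ∂stdCGaussian = 0 := by
  have hmp : MeasurePreserving (rotation (⟨c, by simp [Submonoid.unitSphere, hc]⟩ : Circle)) :=
    (rotation (⟨c, by simp [Submonoid.unitSphere, hc]⟩ : Circle)).measurePreserving
  rw [integral_std]
  set I := ∫ z : ℂ, (Real.pi⁻¹ * Real.exp (-‖z‖ ^ 2)) • (z ^ a * (starRingEnd ℂ z) ^ b) with hI
  have key : I = (c ^ a * (starRingEnd ℂ c) ^ b) * I := by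
    conv_lhs => rw [hI]
    rw [← hmp.integral_comp
      (rotation (⟨c, by simp [Submonoid.unitSphere, hc]⟩ : Circle)).toHomeomorph.measurableEmbedding]
    rw [hI, ← integral_const_mul]
    refine integral_congr_ae (.of_forall fun z => ?_)
    have hr : rotation (⟨c, by simp [Submonoid.unitSphere, hc]⟩ : Circle) z = c * z := rfl
    simp only [hr, norm_mul, hc, map_mul, mul_pow, Complex.real_smul, one_mul]
    ring
  have : (c ^ a * (starRingEnd ℂ c) ^ b - 1) * I = 0 := by
    rw [sub_mul, ← key]; ring
  rcases mul_eq_zero.1 this with h' | h'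
  · exact absurd (sub_eq_zero.1 h') h
  · exact h'

lemma moment_ne (a b : ℕ) (hab : a ≠ b) :
    ∫ z, z ^ a * (starRingEnd ℂ z) ^ b ∂stdCGaussian = 0 := by
  apply moment_ne_aux a b (Complex.exp ((Real.pi / ((a : ℝ) - b) : ℝ) * Complex.I))
    (Complex.norm_exp_ofReal_mul_I _)
  have h0 : (a : ℂ) - b ≠ 0 := by
    rw [sub_ne_zero]; exact_mod_cast hab
  rw [← Complex.exp_conj, ← Complex.exp_nat_mul, ← Complex.exp_nat_mul, ← Complex.exp_add]
  have : (a : ℂ) * ((Real.pi / ((a : ℝ) - b) : ℝ) * Complex.I) +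
      b * (starRingEnd ℂ) ((Real.pi / ((a : ℝ) - b) : ℝ) * Complex.I) = Real.pi * Complex.I := by
    rw [map_mul, Complex.conj_ofReal, Complex.conj_I]
    push_cast
    field_simp
    ring
  rw [this, Complex.exp_pi_mul_I]
  norm_num

lemma prod_fiber {n : ℕ} (f : Fin n → Fin n) (x : Fin n → ℂ) :
    ∏ i, x (f i) = ∏ j, x j ^ (Fintype.card {i // f i = j}) := by
  rw [← Finset.prod_fiberwise univ f (fun i => x (f i))]
  refine Finset.prod_congr rfl fun j _ => ?_
  rw [Finset.prod_congr rfl (g := fun _ => x j) (by simp +contextual), Finset.prod_const,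
    Fintype.card_subtype]

lemma card_perm {n : ℕ} (f g : Fin n → Fin n) :
    Fintype.card {σ : Equiv.Perm (Fin n) // f ∘ σ = g} =
      ∏ j, if Fintype.card {i // f i = j} = Fintype.card {i // g i = j}
        then (Fintype.card {i // f i = j}).factorial else 0 := by
  by_cases h : ∀ j, Fintype.card {i // f i = j} = Fintype.card {i // g i = j}
  · simp only [h, if_true]
    simp only [← h]
    have e : ∀ j, Nonempty ({i // g i = j} ≃ {i // f i = j}) := fun j =>
      ⟨Fintype.equivOfCardEq (h j).symm⟩
    replace e := fun j => (e j).some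
    let τ : Equiv.Perm (Fin n) := (Equiv.sigmaFiberEquiv g).symm.trans
      ((Equiv.sigmaCongrRight e).trans (Equiv.sigmaFiberEquiv f))
    have hτ : ∀ i, f (τ i) = g i := fun i => (e (g i) ⟨i, rfl⟩).2
    rw [← DomMulAct.stabilizer_card]
    refine Fintype.card_congr ((Equiv.mulRight τ⁻¹).subtypeEquiv fun σ => ?_)
    constructor
    · intro hσ
      funext i
      have := congrFun hσ (τ⁻¹ i)
      simp only [Function.comp_apply] at this
      simp only [Equiv.coe_mulRight, Equiv.Perm.coe_mul, Function.comp_apply, this]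
      rw [← hτ]; simp
    · intro hσ
      funext i
      have := congrFun hσ (τ i)
      simpa [hτ] using this
  · push Not at h
    obtain ⟨j, hj⟩ := h
    rw [Finset.prod_eq_zero (mem_univ j) (by simp [hj]), Fintype.card_eq_zero_iff]
    refine ⟨fun ⟨σ, hσ⟩ => hj ?_⟩
    refine (Fintype.card_congr (σ.subtypeEquiv fun i => ?_)).symm
    rw [← hσ]; rfl

lemma mono_eq {n : ℕ} (f g : Fin n → Fin n) (x : Fin n → ℂ) :
    (∏ i, x (f i)) * ∏ i, starRingEnd ℂ (x (g i)) =
      ∏ j, (x j ^ (Fintype.card {i // f i = j}) *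
        (starRingEnd ℂ (x j)) ^ (Fintype.card {i // g i = j})) := by
  rw [prod_fiber, prod_fiber g (fun j => starRingEnd ℂ (x j)), Finset.prod_mul_distrib]

lemma wick_integrable {n : ℕ} (f g : Fin n → Fin n) :
    Integrable (fun x => (∏ i, x (f i)) * ∏ i, starRingEnd ℂ (x (g i))) (stdCGaussianVec n) := by
  simp_rw [mono_eq]
  unfold stdCGaussianVec
  exact Integrable.fintype_prod (f := fun j z => z ^ (Fintype.card {i // f i = j}) *
        (starRingEnd ℂ z) ^ (Fintype.card {i // g i = j})) fun j => integrable_mono _ _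

lemma wick {n : ℕ} (f g : Fin n → Fin n) :
    ∫ x, (∏ i, x (f i)) * ∏ i, starRingEnd ℂ (x (g i)) ∂(stdCGaussianVec n) =
      (Fintype.card {σ : Equiv.Perm (Fin n) // f ∘ σ = g} : ℂ) := by
  simp_rw [mono_eq]
  unfold stdCGaussianVec
  rw [integral_fintype_prod_eq_prod (fun j z => z ^ (Fintype.card {i // f i = j}) *
        (starRingEnd ℂ z) ^ (Fintype.card {i // g i = j})), card_perm]
  push_cast
  refine Finset.prod_congr rfl fun j _ => ?_
  split_ifs with h
  · rw [← h, moment_eq]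
  · exact moment_ne _ _ h

lemma perm_expand {n : ℕ} (V : Matrix (Fin n) (Fin n) ℂ) :
    perm (Vᴴ * V) = ∑ f : Fin n → Fin n, ∑ g : Fin n → Fin n,
      ((∏ i, starRingEnd ℂ (V (f i) i)) * ∏ i, V (g i) i) *
        (Fintype.card {σ : Equiv.Perm (Fin n) // f ∘ σ = g} : ℂ) := by
  unfold perm
  have h1 : ∀ σ : Equiv.Perm (Fin n), ∏ i, (Vᴴ * V) i (σ i) =
      ∑ f : Fin n → Fin n, (∏ i, starRingEnd ℂ (V (f i) i)) * ∏ i, V (f (σ⁻¹ i)) i := by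
    intro σ
    simp only [Matrix.mul_apply, Matrix.conjTranspose_apply]
    rw [Finset.prod_univ_sum, Fintype.piFinset_univ]
    refine Finset.sum_congr rfl fun f _ => ?_
    rw [Finset.prod_mul_distrib, ← Equiv.prod_comp σ (fun i => V (f (σ⁻¹ i)) i)]
    simp
  simp_rw [h1]
  rw [← Equiv.sum_comp (Equiv.inv (Equiv.Perm (Fin n))), Finset.sum_comm]
  refine Finset.sum_congr rfl fun f _ => ?_
  simp only [Equiv.inv_apply, inv_inv]
  rw [← Finset.sum_fiberwise univ (fun σ : Equiv.Perm (Fin n) => f ∘ σ)]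
  refine Finset.sum_congr rfl fun g _ => ?_
  rw [Finset.sum_congr rfl (g := fun _ => (∏ i, starRingEnd ℂ (V (f i) i)) * ∏ i, V (g i) i),
    Finset.sum_const, Fintype.card_subtype, nsmul_eq_mul, mul_comm]
  intro σ hσ
  rw [← (Finset.mem_filter.1 hσ).2]
  rfl

lemma integrand_expand {n : ℕ} (V : Matrix (Fin n) (Fin n) ℂ) (x : Fin n → ℂ) :
    ((∏ i, ‖star (fun j => V j i) ⬝ᵥ x‖ ^ 2 : ℝ) : ℂ) =
      ∑ f : Fin n → Fin n, ∑ g : Fin n → Fin n,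
      ((∏ i, starRingEnd ℂ (V (f i) i)) * ∏ i, V (g i) i) *
        ((∏ i, x (f i)) * ∏ i, starRingEnd ℂ (x (g i))) := by
  push_cast
  simp_rw [← Complex.mul_conj']
  rw [Finset.prod_mul_distrib]
  simp only [dotProduct, map_sum, Pi.star_apply, map_mul, RCLike.star_def, Complex.conj_conj]
  rw [Finset.prod_univ_sum, Finset.prod_univ_sum, Fintype.piFinset_univ, Finset.sum_mul_sum]
  refine Finset.sum_congr rfl fun f _ => Finset.sum_congr rfl fun g _ => ?_
  simp only [Finset.prod_mul_distrib]
  ring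

/-- Gaussian integral representation of the permanent of an HPSD matrix `A = Vᴴ V`:
`per A = E_x[∏ᵢ |⟨vᵢ, x⟩|²]` for `x ~ 𝒞𝒩(0, I_n)`, where `vᵢ` are the columns of `V`. -/
theorem stmt14 (n : ℕ) (V : Matrix (Fin n) (Fin n) ℂ) :
    perm (Vᴴ * V) =
      ((∫ x, ∏ i, ‖star (fun j => V j i) ⬝ᵥ x‖ ^ 2 ∂(stdCGaussianVec n) : ℝ) : ℂ) := by
  rw [perm_expand, ← integral_complex_ofReal]
  simp_rw [integrand_expand]
  rw [integral_finsetSum _ fun f _ => integrable_finsetSum _ fun g _ =>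
    (wick_integrable f g).const_mul _]
  refine Finset.sum_congr rfl fun f _ => ?_
  rw [integral_finsetSum _ fun g _ => (wick_integrable f g).const_mul _]
  refine Finset.sum_congr rfl fun g _ => ?_
  rw [integral_const_mul, wick]
end

section
/- Suppose Pate's inequality per(A ⊗ J_k) ≥ per(A)^k (k!)^n holds for an n×n HPSD matrix A and all positive integers k, where J_k is the k×k all-ones matrix. Then per(A) ≤ max_{‖x‖²=n} ∏_{i=1}^n |⟨v_i, x⟩|², where A = V†V with columns v_i. -/
open Matrix Finset ComplexOrder Kronecker

def cnt {n : ℕ} {ι : Type*} [Fintype ι] (f : ι → Fin n) (j : Fin n) : ℕ :=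
  Fintype.card {a // f a = j}

noncomputable def wt {n : ℕ} {ι : Type*} [Fintype ι] (W : Matrix (Fin n) ι ℂ) (f : ι → Fin n) : ℂ :=
  ∏ a, W (f a) a

noncomputable def coef {n : ℕ} {ι : Type*} [Fintype ι] [DecidableEq ι] (W : Matrix (Fin n) ι ℂ) (α : Fin n → ℕ) : ℂ :=
  ∑ f : ι → Fin n with cnt f = α, wt W f

section
variable {n : ℕ} {ι : Type*} [Fintype ι] [DecidableEq ι]

lemma cnt_comp (f : ι → Fin n) (σ : Equiv.Perm ι) : cnt (f ∘ σ) = cnt f := by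
  funext j
  exact Fintype.card_congr (σ.subtypeEquiv (by intro a; rfl))

lemma exists_perm (f g : ι → Fin n) (h : cnt g = cnt f) : ∃ τ : Equiv.Perm ι, f ∘ τ = g := by
  have e : ∀ j, Nonempty ({a // g a = j} ≃ {a // f a = j}) := fun j =>
    Fintype.card_eq.1 (congrFun h j)
  let e := fun j => (e j).some
  refine ⟨(Equiv.sigmaFiberEquiv g).symm.trans ((Equiv.sigmaCongrRight e).trans (Equiv.sigmaFiberEquiv f)), ?_⟩
  funext a
  exact (e (g a) ⟨a, rfl⟩).2

lemma card_fib (f g : ι → Fin n) :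
    (#{σ : Equiv.Perm ι | f ∘ σ = g}) = if cnt g = cnt f then ∏ j, (cnt f j).factorial else 0 := by
  split_ifs with h
  · obtain ⟨τ, rfl⟩ := exists_perm f g h
    have := DomMulAct.stabilizer_card f
    unfold cnt
    rw [← this, Fintype.card_subtype]
    refine Finset.card_bij' (fun σ _ => τ⁻¹.trans σ) (fun σ _ => τ.trans σ) ?_ ?_ ?_ ?_
    · intro σ hσ
      simp only [mem_filter, mem_univ, true_and] at hσ ⊢
      funext a
      have := congrFun hσ (τ⁻¹ a)
      simpa using this
    · intro σ hσ
      simp only [mem_filter, mem_univ, true_and] at hσ ⊢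
      funext a
      have := congrFun hσ (τ a)
      simpa using this
    · intro σ _; ext a; simp
    · intro σ _; ext a; simp
  · rw [Finset.card_eq_zero, Finset.filter_eq_empty_iff]
    rintro σ - rfl
    exact h (cnt_comp f σ)

lemma sum_wt_comp (W : Matrix (Fin n) ι ℂ) (f : ι → Fin n) :
    ∑ σ : Equiv.Perm ι, wt W (f ∘ σ) = (∏ j, ((cnt f j).factorial : ℂ)) * coef W (cnt f) := by
  rw [← Finset.sum_fiberwise (s := univ) (g := fun σ : Equiv.Perm ι => f ∘ σ)]
  have : ∀ g : ι → Fin n, ∑ σ : Equiv.Perm ι with f ∘ ⇑(σ : Equiv.Perm ι) = g, wt W (f ∘ σ)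
      = if cnt g = cnt f then (∏ j, ((cnt f j).factorial : ℂ)) * wt W g else 0 := by
    intro g
    rw [Finset.sum_congr rfl (g := fun _ => wt W g)]
    · rw [Finset.sum_const, card_fib]
      split_ifs <;> simp
    · intro σ hσ
      rw [(mem_filter.1 hσ).2]
  rw [Finset.sum_congr rfl fun g _ => this g, coef, Finset.mul_sum, Finset.sum_filter]

lemma cnt_mem (f : ι → Fin n) : cnt f ∈ piAntidiag (univ : Finset (Fin n)) (Fintype.card ι) := by
  simp only [mem_piAntidiag, mem_univ, implies_true, and_true]
  unfold cnt
  rw [← Fintype.card_sigma]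
  exact Fintype.card_congr (Equiv.sigmaFiberEquiv f)

lemma perm_gram (W : Matrix (Fin n) ι ℂ) :
    perm (Wᴴ * W) = ((∑ α ∈ piAntidiag (univ : Finset (Fin n)) (Fintype.card ι),
      (∏ j, ((α j).factorial : ℝ)) * ‖coef W α‖ ^ 2 : ℝ) : ℂ) := by
  have h1 : perm (Wᴴ * W) = ∑ f : ι → Fin n, star (wt W f) * ∑ σ : Equiv.Perm ι, wt W (f ∘ σ) := by
    unfold perm
    simp only [Matrix.mul_apply, Matrix.conjTranspose_apply, Finset.prod_univ_sum,
      Finset.mul_sum]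
    rw [Finset.sum_comm]
    rw [Fintype.piFinset_univ]
    refine Finset.sum_congr rfl fun f _ => ?_
    rw [← Equiv.sum_comp (Equiv.inv (Equiv.Perm ι))]
    refine Finset.sum_congr rfl fun σ _ => ?_
    rw [Finset.prod_mul_distrib, wt, wt, star_prod]
    congr 1
    rw [← Equiv.prod_comp σ]
    simp
  rw [h1]
  simp only [sum_wt_comp]
  rw [← Finset.sum_fiberwise_of_maps_to (s := univ) (g := fun f : ι → Fin n => cnt f) (fun f _ => cnt_mem f)]
  push_cast
  refine Finset.sum_congr rfl fun α _ => ?_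
  rw [Finset.sum_congr rfl (g := fun f => star (wt W f) * ((∏ j, ((α j).factorial : ℂ)) * coef W α))]
  · rw [← Finset.sum_mul, ← star_sum]
    change star (coef W α) * _ = _
    rw [mul_left_comm]
    congr 1
    rw [mul_comm]
    exact Complex.mul_conj' _
  · intro f hf
    rw [(mem_filter.1 hf).2]

lemma prod_cnt (x : Fin n → ℂ) (f : ι → Fin n) : ∏ a, x (f a) = ∏ j, x j ^ cnt f j := by
  rw [← Finset.prod_fiberwise (s := univ) (g := f)]
  refine Finset.prod_congr rfl fun j _ => ?_
  rw [Finset.prod_congr rfl (g := fun _ => x j)]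
  · rw [Finset.prod_const, cnt, Fintype.card_subtype]
  · intro a ha; rw [(mem_filter.1 ha).2]

lemma root_sum (N a b : ℕ) (ha : a ≤ N) (hb : b ≤ N) (ζ : ℂ) (hζ : IsPrimitiveRoot ζ (N+1)) :
    ∑ m ∈ range (N+1), (ζ ^ m) ^ a * ((ζ ^ m) ^ b)⁻¹ = if a = b then (N + 1 : ℂ) else 0 := by
  have h0 : ζ ≠ 0 := hζ.ne_zero (by omega)
  split_ifs with h
  · subst h
    rw [Finset.sum_congr rfl (g := fun _ => (1:ℂ))]
    · simp
    · intro m _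
      exact mul_inv_cancel₀ (by positivity)
  · have hz : ζ ^ a * (ζ ^ b)⁻¹ ≠ 1 := by
      intro hh
      have : ζ ^ a = ζ ^ b := by
        field_simp at hh; exact hh
      exact h (hζ.pow_inj (by omega) (by omega) this)
    rw [Finset.sum_congr rfl (g := fun m => (ζ ^ a * (ζ ^ b)⁻¹) ^ m)]
    · rw [geom_sum_eq hz]
      have : (ζ ^ a * (ζ ^ b)⁻¹) ^ (N+1) = 1 := by
        rw [mul_pow, inv_pow, ← pow_mul, ← pow_mul, mul_comm a, mul_comm b, pow_mul, pow_mul, hζ.pow_eq_one]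
        simp
      rw [this]; simp
    · intro m _
      rw [mul_pow, inv_pow]; ring

lemma cauchy (W : Matrix (Fin n) ι ℂ) (r : Fin n → ℝ) (hr : ∀ j, 0 ≤ r j) (B : ℝ)
    (hB : ∀ x : Fin n → ℂ, (∀ j, ‖x j‖ = r j) → ‖∏ a, ∑ j, W j a * x j‖ ≤ B)
    (α : Fin n → ℕ) (hα : ∀ j, α j ≤ Fintype.card ι) :
    ‖coef W α‖ * ∏ j, r j ^ α j ≤ B := by
  set N := Fintype.card ι with hN
  obtain ⟨ζ, hζ⟩ : ∃ ζ : ℂ, IsPrimitiveRoot ζ (N+1) := ⟨_, Complex.isPrimitiveRoot_exp (N+1) (by omega)⟩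
  have hζ1 : ‖ζ‖ = 1 := hζ.norm'_eq_one (by omega)
  have hcnt : ∀ (f : ι → Fin n) j, cnt f j ≤ N := fun f j => Fintype.card_subtype_le _
  let T := Fintype.piFinset (fun _ : Fin n => range (N+1))
  have key : ∑ m ∈ T, (∏ a, ∑ j, W j a * (r j * ζ ^ m j)) * ∏ j, ((ζ ^ m j) ^ α j)⁻¹
      = (N + 1 : ℂ) ^ n * (coef W α * ∏ j, (r j : ℂ) ^ α j) := by
    have e1 : ∀ m : Fin n → ℕ, (∏ a, ∑ j, W j a * (r j * ζ ^ m j)) * ∏ j, ((ζ ^ m j) ^ α j)⁻¹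
       = ∑ f : ι → Fin n, wt W f * (∏ j, (r j : ℂ) ^ cnt f j) * ∏ j, ((ζ ^ m j) ^ cnt f j * ((ζ ^ m j) ^ α j)⁻¹) := by
      intro m
      rw [Finset.prod_univ_sum, Fintype.piFinset_univ, Finset.sum_mul]
      refine Finset.sum_congr rfl fun f _ => ?_
      rw [Finset.prod_mul_distrib, prod_cnt (fun j => (r j : ℂ) * ζ ^ m j) f]
      simp only [mul_pow, Finset.prod_mul_distrib, wt]
      ring
    rw [Finset.sum_congr rfl fun m _ => e1 m, Finset.sum_comm]
    have e2 : ∀ f : ι → Fin n, ∑ m ∈ T, wt W f * (∏ j, (r j : ℂ) ^ cnt f j) * ∏ j, ((ζ ^ m j) ^ cnt f j * ((ζ ^ m j) ^ α j)⁻¹)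
        = if cnt f = α then (N + 1 : ℂ) ^ n * (wt W f * ∏ j, (r j : ℂ) ^ α j) else 0 := by
      intro f
      rw [← Finset.mul_sum, ← Finset.prod_univ_sum (fun _ : Fin n => range (N+1)) (fun j m => (ζ ^ m) ^ cnt f j * ((ζ ^ m) ^ α j)⁻¹)]
      rw [Finset.prod_congr rfl fun j _ => root_sum N (cnt f j) (α j) (hcnt f j) (hα j) ζ hζ]
      split_ifs with h
      · subst h
        simp
        ring
      · obtain ⟨j, hj⟩ := Function.ne_iff.1 h
        refine mul_eq_zero_of_right _ (Finset.prod_eq_zero (mem_univ j) (if_neg hj))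
    rw [Finset.sum_congr rfl fun f _ => e2 f, coef, Finset.sum_mul, Finset.mul_sum, Finset.sum_filter]
  have h2 := congrArg norm key
  rw [norm_mul, norm_mul, norm_prod] at h2
  have h3 : ∑ m ∈ T, ‖(∏ a, ∑ j, W j a * (r j * ζ ^ m j)) * ∏ j, ((ζ ^ m j) ^ α j)⁻¹‖ ≤ ∑ m ∈ T, B := by
    refine Finset.sum_le_sum fun m _ => ?_
    rw [norm_mul, norm_prod (f := fun j => ((ζ ^ m j) ^ α j)⁻¹)]
    simp only [norm_inv, norm_pow, hζ1, one_pow, inv_one, Finset.prod_const_one, mul_one]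
    refine hB (fun j => r j * ζ ^ m j) fun j => ?_
    simp [hζ1, abs_of_nonneg (hr j)]
  have h4 := (norm_sum_le _ _).trans h3
  rw [h2, Finset.sum_const, Fintype.card_piFinset] at h4
  have h5 : ‖(N + 1 : ℂ) ^ n‖ = (N + 1 : ℝ) ^ n := by
    rw [norm_pow]; congr 1; exact_mod_cast Complex.norm_natCast (N+1)
  simp only [h5, norm_pow, Complex.norm_real, Real.norm_eq_abs, fun j => abs_of_nonneg (hr j), card_range, Finset.prod_const, card_univ, Fintype.card_fin, nsmul_eq_mul] at h4
  push_cast at h4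
  exact le_of_mul_le_mul_left h4 (by positivity)

end

lemma fact_pow (a b : ℕ) : a.factorial * a ^ b ≤ b.factorial * a ^ a := by
  rcases le_total a b with h | h
  · have := Nat.factorial_mul_pow_le_factorial (m := a) (n := b - a)
    calc a.factorial * a ^ b = (a.factorial * a ^ (b - a)) * a ^ a := by
          rw [mul_assoc, ← pow_add]; congr 2; omega
      _ ≤ (a.factorial * (a+1) ^ (b - a)) * a ^ a := by gcongr; omega
      _ ≤ _ := by
          gcongr
          rwa [Nat.add_sub_cancel' h] at this
  · have h2 : a.factorial ≤ b.factorial * a ^ (a - b) := by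
      have h3 := Nat.factorial_mul_descFactorial (Nat.sub_le a b)
      rw [Nat.sub_sub_self h] at h3
      rw [← h3]
      gcongr
      exact Nat.descFactorial_le_pow _ _
    calc a.factorial * a ^ b ≤ b.factorial * a ^ (a - b) * a ^ b := by gcongr
      _ = _ := by rw [mul_assoc, ← pow_add]; congr 2; omega

lemma card_anti (n N : ℕ) : #(piAntidiag (univ : Finset (Fin n)) N) ≤ (N+1) ^ n := by
  have : piAntidiag (univ : Finset (Fin n)) N ⊆ Fintype.piFinset (fun _ => range (N+1)) := by
    intro α hα
    simp only [mem_piAntidiag, Fintype.mem_piFinset, mem_range] at hα ⊢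
    intro j
    have h1 := Finset.single_le_sum (f := α) (fun _ _ => Nat.zero_le _) (mem_univ j)
    have h2 := hα.1
    change ∑ x, α x = N at h2
    omega
  simpa using Finset.card_le_card this

lemma multi (n N : ℕ) (α : Fin n → ℕ) (hα : ∑ j, α j = N) :
    (∏ j, (α j).factorial) * N ^ N ≤ (N+1)^n * (N.factorial * ∏ j, α j ^ α j) := by
  have h := Finset.sum_pow_eq_sum_piAntidiag (univ : Finset (Fin n)) α N
  rw [hα] at h
  simp only [Nat.cast_id] at h
  rw [h, Finset.mul_sum]
  refine le_trans (Finset.sum_le_card_nsmul _ _ (N.factorial * ∏ j, α j ^ α j) ?_) ?_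
  · intro β hβ
    have hs := Nat.multinomial_spec (univ : Finset (Fin n)) β
    rw [(mem_piAntidiag.1 hβ).1] at hs
    have : (∏ j, (α j).factorial) * ∏ j, α j ^ β j ≤ (∏ j, (β j).factorial) * ∏ j, α j ^ α j := by
      rw [← Finset.prod_mul_distrib, ← Finset.prod_mul_distrib]
      exact Finset.prod_le_prod' fun j _ => fact_pow _ _
    rw [← hs]
    nlinarith [Nat.zero_le (Nat.multinomial univ β)]
  · rw [smul_eq_mul]
    gcongr
    exact card_anti n N

lemma fact_le (n k : ℕ) : (n * k).factorial ≤ n ^ (n * k) * k.factorial ^ n := by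
  have h := Finset.sum_pow_eq_sum_piAntidiag (univ : Finset (Fin n)) (fun _ => (1:ℕ)) (n * k)
  simp only [sum_const, card_univ, Fintype.card_fin, smul_eq_mul, mul_one, one_pow, prod_const_one, Nat.cast_id] at h
  have hs := Nat.multinomial_spec (univ : Finset (Fin n)) (fun _ => k)
  simp only [prod_const, sum_const, card_univ, Fintype.card_fin, smul_eq_mul] at hs
  rw [← hs, h, mul_comm]
  gcongr
  refine Finset.single_le_sum (f := fun β => Nat.multinomial (univ : Finset (Fin n)) β) (fun _ _ => Nat.zero_le _) (a := fun _ => k) ?_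
  simp

lemma growth (P M : ℝ) (hM : 0 ≤ M) (n : ℕ) (h : ∀ k : ℕ, 0 < k → P ^ k ≤ ((n * k + 1 : ℕ) : ℝ) ^ (2 * n) * M ^ k) :
    P ≤ M := by
  by_contra! hlt
  rcases hM.eq_or_lt with rfl | hM
  · have := h 1 one_pos
    simp at this
    linarith
  have hr : 1 < P / M := by rwa [one_lt_div hM]
  have ht := (tendsto_pow_const_div_const_pow_of_one_lt (2 * n) hr).const_mul ((n + 1 : ℝ) ^ (2 * n))
  rw [mul_zero] at ht
  obtain ⟨k, hk, hk0⟩ := ((ht.eventually (gt_mem_nhds one_pos)).and (Filter.eventually_gt_atTop 0)).exists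
  have h1 := h k hk0
  have h2 : ((n * k + 1 : ℕ) : ℝ) ^ (2 * n) ≤ (n + 1 : ℝ) ^ (2 * n) * (k:ℝ) ^ (2 * n) := by
    rw [← mul_pow]
    gcongr
    have : (1:ℝ) ≤ k := by exact_mod_cast hk0
    push_cast; nlinarith
  have h3 : 0 < (P / M) ^ k := by positivity
  rw [← mul_div_assoc, div_lt_one h3, div_pow, lt_div_iff₀ (by positivity)] at hk
  have := mul_le_mul_of_nonneg_right h2 (by positivity : 0 ≤ M ^ k)
  linarith

lemma bdd (n : ℕ) (V : Matrix (Fin n) (Fin n) ℂ) : BddAbove {t : ℝ | ∃ x : Fin n → ℂ, ∑ i, ‖x i‖ ^ 2 = (n : ℝ) ∧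
        t = ∏ i, ‖star (fun j => V j i) ⬝ᵥ x‖ ^ 2} := by
  refine ⟨∏ i, (∑ j, ‖V j i‖ * n) ^ 2, ?_⟩
  rintro t ⟨x, hx, rfl⟩
  have hxj : ∀ j, ‖x j‖ ≤ n := by
    intro j
    have h1 := Finset.single_le_sum (f := fun j => ‖x j‖ ^ 2) (fun _ _ => by positivity) (mem_univ j)
    have hn : (1:ℝ) ≤ n := by exact_mod_cast (show 1 ≤ n by have := j.2; omega)
    simp only [hx] at h1
    refine abs_le_of_sq_le_sq' (by nlinarith) (by positivity) |>.2
  refine Finset.prod_le_prod (fun _ _ => by positivity) fun i _ => ?_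
  gcongr
  refine (norm_sum_le _ _).trans (Finset.sum_le_sum fun j _ => ?_)
  rw [norm_mul]
  simp only [Pi.star_apply, norm_star]
  gcongr
  exact hxj j

lemma homog (n : ℕ) (hn : 0 < n) (V : Matrix (Fin n) (Fin n) ℂ) (M : ℝ)
    (hM : ∀ x : Fin n → ℂ, ∑ i, ‖x i‖ ^ 2 = (n : ℝ) → ∏ i, ‖star (fun j => V j i) ⬝ᵥ x‖ ^ 2 ≤ M)
    (x : Fin n → ℂ) :
    (n:ℝ) ^ n * ∏ i, ‖∑ j, V j i * x j‖ ^ 2 ≤ M * (∑ j, ‖x j‖ ^ 2) ^ n := by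
  have hS : 0 ≤ ∑ j, ‖x j‖ ^ 2 := by positivity
  set S := ∑ j, ‖x j‖ ^ 2 with hSdef
  rcases hS.eq_or_lt with h0 | hpos
  · have : ∀ j, x j = 0 := by
      intro j
      have := (Finset.sum_eq_zero_iff_of_nonneg (s := univ) (f := fun j => ‖x j‖ ^ 2) (fun _ _ => by positivity)).1 h0.symm j (mem_univ j)
      simpa using this
    rw [← h0]
    simp [this, hn.ne']
  · let c : ℝ := Real.sqrt (n / S)
    have hc : c ^ 2 = n / S := Real.sq_sqrt (by positivity)
    have hc0 : 0 ≤ c := Real.sqrt_nonneg _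
    have := hM (fun j => c * star (x j)) (by
      simp only [norm_mul, mul_pow, norm_star, Complex.norm_real, Real.norm_eq_abs, sq_abs, ← Finset.mul_sum]
      rw [← hSdef, hc]; field_simp)
    have e : ∀ i, ‖star (fun j => V j i) ⬝ᵥ (fun j => (c:ℂ) * star (x j))‖ ^ 2 = c ^ 2 * ‖∑ j, V j i * x j‖ ^ 2 := by
      intro i
      have : star (fun j => V j i) ⬝ᵥ (fun j => (c:ℂ) * star (x j)) = c * star (∑ j, V j i * x j) := by
        simp only [dotProduct, Pi.star_apply, star_sum, Finset.mul_sum, star_mul]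
        refine Finset.sum_congr rfl fun j _ => ?_
        ring
      rw [this, norm_mul, norm_star, Complex.norm_real, mul_pow, Real.norm_eq_abs, sq_abs]
    simp only [e, Finset.prod_mul_distrib, Finset.prod_const, card_univ, Fintype.card_fin, hc] at this
    rw [div_pow, div_mul_eq_mul_div, div_le_iff₀ (by positivity)] at this
    simpa [Finset.prod_pow] using this

/-- If Pate's inequality `per(A ⊗ J_k) ≥ per(A)^k (k!)^n` holds for `A = Vᴴ V` and all
positive integers `k` (with `J_k` the `k × k` all-ones matrix), then
`per A ≤ max_{‖x‖² = n} ∏ᵢ |⟨vᵢ, x⟩|²`. -/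
theorem stmt18 (n : ℕ) (V : Matrix (Fin n) (Fin n) ℂ)
    (hpate : ∀ k : ℕ, 0 < k →
      (perm (Vᴴ * V)) ^ k * ((k.factorial : ℂ)) ^ n ≤
        perm ((Vᴴ * V) ⊗ₖ (Matrix.of fun _ _ : Fin k => (1 : ℂ)))) :
    (perm (Vᴴ * V)).re ≤
      sSup {t : ℝ | ∃ x : Fin n → ℂ, ∑ i, ‖x i‖ ^ 2 = (n : ℝ) ∧
        t = ∏ i, ‖star (fun j => V j i) ⬝ᵥ x‖ ^ 2} := by
  rcases Nat.eq_zero_or_pos n with rfl | hn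
  · simp [perm]
  have hM : ∀ x : Fin n → ℂ, ∑ i, ‖x i‖ ^ 2 = (n : ℝ) → ∏ i, ‖star (fun j => V j i) ⬝ᵥ x‖ ^ 2 ≤
      sSup {t : ℝ | ∃ x : Fin n → ℂ, ∑ i, ‖x i‖ ^ 2 = (n : ℝ) ∧
        t = ∏ i, ‖star (fun j => V j i) ⬝ᵥ x‖ ^ 2} := fun x hx => le_csSup (bdd n V) ⟨x, hx, rfl⟩
  have hM0 : 0 ≤ sSup {t : ℝ | ∃ x : Fin n → ℂ, ∑ i, ‖x i‖ ^ 2 = (n : ℝ) ∧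
        t = ∏ i, ‖star (fun j => V j i) ⬝ᵥ x‖ ^ 2} := by
    refine Real.sSup_nonneg ?_
    rintro t ⟨x, -, rfl⟩
    positivity
  generalize sSup {t : ℝ | ∃ x : Fin n → ℂ, ∑ i, ‖x i‖ ^ 2 = (n : ℝ) ∧
        t = ∏ i, ‖star (fun j => V j i) ⬝ᵥ x‖ ^ 2} = M at hM hM0 ⊢
  obtain ⟨P, hP⟩ : ∃ P : ℝ, perm (Vᴴ * V) = P := ⟨_, perm_gram V⟩
  rw [hP] at hpate ⊢
  rw [Complex.ofReal_re]
  refine growth P M hM0 n fun k hk => ?_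
  let W : Matrix (Fin n) (Fin n × Fin k) ℂ := Matrix.of fun j a => V j a.1
  have hW : (Vᴴ * V) ⊗ₖ (Matrix.of fun _ _ : Fin k => (1 : ℂ)) = Wᴴ * W := by
    ext a b
    simp [W, Matrix.mul_apply, Matrix.kroneckerMap_apply]
  have hp := hpate k hk
  rw [hW, perm_gram W] at hp
  have hcard : Fintype.card (Fin n × Fin k) = n * k := by simp
  rw [hcard] at hp
  set N := n * k with hN
  have hp' : P ^ k * (k.factorial : ℝ) ^ n ≤ ∑ α ∈ piAntidiag (univ : Finset (Fin n)) N,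
      (∏ j, ((α j).factorial : ℝ)) * ‖coef W α‖ ^ 2 := by exact_mod_cast hp
  have hn' : (0:ℝ) < n := by exact_mod_cast hn
  have hterm : ∀ α ∈ piAntidiag (univ : Finset (Fin n)) N,
      (n:ℝ) ^ N * ((∏ j, ((α j).factorial : ℝ)) * ‖coef W α‖ ^ 2) ≤ ((N + 1 : ℕ) : ℝ) ^ n * (M ^ k * N.factorial) := by
    intro α hα
    have hsum : ∑ j, α j = N := (mem_piAntidiag.1 hα).1
    have hc := cauchy W (fun j => Real.sqrt (α j)) (fun j => Real.sqrt_nonneg _)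
      (Real.sqrt (M ^ k * N ^ N / n ^ N)) (by
        intro x hx
        refine Real.le_sqrt_of_sq_le ?_
        have hh := homog n hn V M hM x
        have hS : ∑ j, ‖x j‖ ^ 2 = N := by
          simp only [hx, Real.sq_sqrt (Nat.cast_nonneg _)]
          exact_mod_cast hsum
        rw [hS] at hh
        have hh2 := pow_le_pow_left₀ (by positivity) hh k
        rw [le_div_iff₀ (by positivity)]
        have : ‖∏ a, ∑ j, W j a * x j‖ ^ 2 = (∏ i, ‖∑ j, V j i * x j‖ ^ 2) ^ k := by
          rw [Fintype.prod_prod_type]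
          simp only [W, Matrix.of_apply, Finset.prod_const, card_univ, Fintype.card_fin, norm_prod, norm_pow]
          rw [← Finset.prod_pow, ← Finset.prod_pow]
          refine Finset.prod_congr rfl fun i _ => ?_
          ring
        rw [this]
        rw [mul_pow, mul_pow, ← pow_mul, ← pow_mul, ← hN] at hh2
        linarith) α (by
        intro j
        rw [hcard, ← hsum]
        exact Finset.single_le_sum (f := α) (fun _ _ => Nat.zero_le _) (mem_univ j))
    have hc2 := pow_le_pow_left₀ (by positivity) hc 2
    rw [Real.sq_sqrt (by positivity), mul_pow, ← Finset.prod_pow, le_div_iff₀ (by positivity)] at hc2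
    have e : ∀ j, (Real.sqrt (α j) ^ α j) ^ 2 = (α j : ℝ) ^ α j := by
      intro j
      rw [← pow_mul, mul_comm, pow_mul, Real.sq_sqrt (Nat.cast_nonneg _)]
    simp only [e] at hc2
    have hm : (∏ j, ((α j).factorial : ℝ)) * (N:ℝ) ^ N ≤ ((N + 1 : ℕ) : ℝ) ^ n * (N.factorial * ∏ j, (α j : ℝ) ^ α j) := by
      exact_mod_cast multi n N α hsum
    have hpos : 0 < ∏ j, (α j : ℝ) ^ α j := by
      refine Finset.prod_pos fun j _ => ?_
      exact_mod_cast Nat.pow_self_pos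
    refine le_of_mul_le_mul_right ?_ hpos
    calc _ = (∏ j, ((α j).factorial : ℝ)) * (‖coef W α‖ ^ 2 * (∏ j, (α j : ℝ) ^ α j) * n ^ N) := by ring
      _ ≤ (∏ j, ((α j).factorial : ℝ)) * (M ^ k * N ^ N) := by gcongr
      _ = M ^ k * ((∏ j, ((α j).factorial : ℝ)) * (N:ℝ) ^ N) := by ring
      _ ≤ M ^ k * (((N + 1 : ℕ) : ℝ) ^ n * (N.factorial * ∏ j, (α j : ℝ) ^ α j)) := by gcongr
      _ = _ := by ring
  have hs := Finset.sum_le_card_nsmul _ _ _ hterm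
  rw [← Finset.mul_sum, nsmul_eq_mul] at hs
  have hca : (#(piAntidiag (univ : Finset (Fin n)) N) : ℝ) ≤ ((N + 1 : ℕ) : ℝ) ^ n := by
    exact_mod_cast card_anti n N
  have hfl : (N.factorial : ℝ) ≤ n ^ N * (k.factorial : ℝ) ^ n := by exact_mod_cast fact_le n k
  have hD : (0:ℝ) < n ^ N * (k.factorial : ℝ) ^ n := by positivity
  refine le_of_mul_le_mul_right ?_ hD
  calc _ = (n:ℝ) ^ N * (P ^ k * (k.factorial : ℝ) ^ n) := by ring
    _ ≤ _ := by gcongr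
    _ ≤ _ := hs
    _ ≤ ((N + 1 : ℕ) : ℝ) ^ n * (((N + 1 : ℕ) : ℝ) ^ n * (M ^ k * (n ^ N * (k.factorial : ℝ) ^ n))) := by gcongr
    _ = _ := by ring
end
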